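/- Let p be an odd prime and W an infinite p-free Coxeter group with |S| = n all of whose proper standard parabolic subgroups are finite. Then H^k(A_W, F_p) = 0 for 0 < k < min{p-2, n-1}. -/

import Mathlib

/-- The sign homomorphism of a Coxeter system, sending every simple reflection to `-1`. -/
noncomputable def CoxeterSystem.signHom {B W : Type*} [Group W] {M : CoxeterMatrix B}
    (cs : CoxeterSystem M W) : W →* ℤˣ :=
  cs.lift ⟨fun _ => -1, fun i i' => by simp⟩

/-- The standard parabolic subgroup `W_T` generated by the simple reflections in `T ⊆ S`. -/
def CoxeterSystem.parabolic {B W : Type*} [Group W] {M : CoxeterMatrix B}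
    (cs : CoxeterSystem M W) (T : Set B) : Subgroup W :=
  Subgroup.closure (cs.simple '' T)

/-- A Coxeter matrix is `p`-free if every entry `m(s,t)` is prime to `p`.  (In Mathlib's
convention the entry `0` stands for `∞`, which counts as prime to every prime.) -/
def CoxeterMatrix.IsPFree {B : Type*} (M : CoxeterMatrix B) (p : ℕ) : Prop :=
  ∀ i i' : B, p ∣ M i i' → M i i' = 0

section
open Polynomial Real

namespace AltCox

/-- Chebyshev sine identities -/
theorem S_sin (θ : ℝ) (j : ℕ) :
    ((Chebyshev.S ℝ (j : ℤ)).eval (2 * cos θ * (2 * cos θ) - 2) * (2 * cos θ)) * sin θ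
        = sin ((2 * j + 2) * θ) ∧
    ((Chebyshev.S ℝ (j : ℤ)).eval (2 * cos θ * (2 * cos θ) - 2) +
      (Chebyshev.S ℝ ((j : ℤ) - 1)).eval (2 * cos θ * (2 * cos θ) - 2)) * sin θ
        = sin ((2 * j + 1) * θ) := by
  induction j with
  | zero =>
    simp [sin_two_mul]; ring
  | succ j ih =>
    obtain ⟨h1, h2⟩ := ih
    have e : Chebyshev.S ℝ ((j + 1 : ℕ) : ℤ) = X * Chebyshev.S ℝ (j : ℤ) - Chebyshev.S ℝ ((j : ℤ) - 1) := by
      push_cast; exact Chebyshev.S_add_one ℝ _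
    have e' : ((j + 1 : ℕ) : ℤ) - 1 = j := by push_cast; ring
    rw [e', e]
    simp only [eval_sub, eval_mul, eval_X]
    set a := (Chebyshev.S ℝ (j : ℤ)).eval (2 * cos θ * (2 * cos θ) - 2)
    set b := (Chebyshev.S ℝ ((j : ℤ) - 1)).eval (2 * cos θ * (2 * cos θ) - 2)
    have k3 : sin ((2 * (j + 1 : ℕ) + 1) * θ) = 2 * cos θ * sin ((2 * j + 2) * θ) - sin ((2 * j + 1) * θ) := by
      push_cast
      rw [show (2 * ((j : ℝ) + 1) + 1) * θ = (2 * j + 2) * θ + θ by ring,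
        show (2 * (j : ℝ) + 1) * θ = (2 * j + 2) * θ - θ by ring, sin_add, sin_sub]; ring
    have k4 : sin ((2 * (j + 1 : ℕ) + 2) * θ) = 2 * cos θ * sin ((2 * (j + 1 : ℕ) + 1) * θ) - sin ((2 * j + 2) * θ) := by
      push_cast
      rw [show (2 * ((j : ℝ) + 1) + 2) * θ = (2 * (j + 1) + 1) * θ + θ by ring,
        show (2 * (j : ℝ) + 2) * θ = (2 * (j + 1) + 1) * θ - θ by ring, sin_add, sin_sub]; ring
    rw [k4, k3, ← h1, ← h2]
    constructor <;> ring

section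
variable {B W : Type*} [Fintype B] [DecidableEq B] [Group W] {M : CoxeterMatrix B}
variable {K : Type} [Field K] [LinearOrder K] [IsStrictOrderedRing K]

/-- An ordered field containing all `2 cos (π / m)`. -/
structure GD (M : CoxeterMatrix B) (K : Type) [Field K] [LinearOrder K] where
  phi : K →+* ℝ
  mono : ∀ x, 0 ≤ phi x → 0 ≤ x
  cf : B → B → K
  hcf : ∀ i j, phi (cf i j) = 2 * cos (π / M i j)

variable (hK : GD M K)

theorem GD.inj {hK : GD M K} {x y : K} (h : hK.phi x = hK.phi y) : x = y := hK.phi.injective h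

/-- simple root -/
noncomputable def al (K : Type) [Field K] (i : B) : B → K := Pi.single i 1

/-- simple coroot -/
noncomputable def co (i : B) : Module.Dual K (B → K) :=
  ∑ j, (-(hK.cf i j)) • LinearMap.proj j

theorem co_al (i j : B) : co hK i (al K j) = -(hK.cf i j) := by
  simp [co, al, Pi.single_apply]

theorem cf_self (i : B) : hK.cf i i = -2 := by
  apply hK.inj; rw [hK.hcf]; simp [map_ofNat]

theorem cf_symm (i j : B) : hK.cf i j = hK.cf j i := by
  apply hK.inj; rw [hK.hcf, hK.hcf, M.symmetric i j]

theorem co_al_self (i : B) : co hK i (al K i) = 2 := by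
  rw [co_al, cf_self]; simp

/-- simple reflection -/
noncomputable def rf (i : B) : (B → K) ≃ₗ[K] (B → K) := Module.reflection (co_al_self hK i)

theorem coe_S (n : ℤ) (x : K) : hK.phi ((Chebyshev.S K n).eval x) = (Chebyshev.S ℝ n).eval (hK.phi x) := by
  have := Polynomial.eval_map_apply (f := hK.phi) (p := Chebyshev.S K n) (x := x)
  rw [Chebyshev.map_S] at this
  exact this.symm

theorem tau (i j : B) : hK.phi ((co hK i (al K j)) * (co hK j (al K i)) - 2) =
    2 * cos (π / M i j) * (2 * cos (π / M i j)) - 2 := by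
  rw [co_al, co_al, cf_symm hK j i]
  simp [hK.hcf, map_ofNat]

theorem rel (i j : B) : (rf hK i * rf hK j) ^ (M i j) = 1 := by
  by_cases hij : i = j
  · subst hij
    rw [M.diagonal, pow_one]
    ext1 v
    exact Module.involutive_reflection (co_al_self hK i) v
  by_cases h0 : M i j = 0
  · rw [h0, pow_zero]
  have h1 : M i j ≠ 1 := M.off_diagonal i j hij
  apply LinearEquiv.toLinearMap_injective
  have key := Module.reflection_mul_reflection_pow (co_al_self hK i) (co_al_self hK j) (M i j)
  rw [rf, rf, key]
  set t := (co hK i (al K j)) * (co hK j (al K i)) - 2 with ht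
  have htR := tau hK i j
  rw [← ht] at htR
  set m := M i j with hm
  have hmpos : (0 : ℝ) < m := by positivity
  have hθ : (m : ℝ) * (π / m) = π := by field_simp
  have hm2 : (2 : ℝ) ≤ m := by exact_mod_cast (show 2 ≤ m by omega)
  have hs : 0 < sin (π / m) := by
    apply sin_pos_of_pos_of_lt_pi (by positivity)
    rw [div_lt_iff₀ hmpos]; nlinarith [pi_pos]
  rcases Nat.even_or_odd' m with ⟨q, hq | hq⟩
  · by_cases hm2' : m = 2
    · have hg : ∀ a b : B, M a b = 2 → co hK a (al K b) = 0 := by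
        intro a b h; rw [co_al]; apply hK.inj; simp [hK.hcf, h]
      have e1 := hg i j hm2'
      have e2 := hg j i (by rw [M.symmetric]; exact hm2')
      have ht2 : t = -2 := by rw [ht, e1]; simp
      rw [hm2']
      norm_num
      rw [ht2, e1, e2]
      apply LinearMap.ext
      intro v
      simp only [LinearMap.add_apply, LinearMap.smul_apply, LinearMap.sub_apply, LinearMap.smulRight_apply, LinearMap.id_apply, LinearEquiv.coe_coe, LinearEquiv.coe_one, id_eq]
      module
    · have hc : 0 < cos (π / m) := by
        apply cos_pos_of_mem_Ioo
        constructor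
        · have : 0 < π / m := by positivity
          linarith [pi_pos]
        · have : (3 : ℝ) ≤ m := by exact_mod_cast (show 3 ≤ m by omega)
          rw [div_lt_iff₀ hmpos]; nlinarith [pi_pos]
      have hS : (Chebyshev.S K ((q : ℤ) - 1)).eval t = 0 := by
        apply hK.inj
        rw [coe_S, htR, map_zero]
        have := (S_sin (π / m) (q - 1)).1
        have hq1 : ((q - 1 : ℕ) : ℝ) = q - 1 := by
          rw [Nat.cast_sub (by omega)]; simp
        have hq2 : ((q - 1 : ℕ) : ℤ) = q - 1 := by
          rw [Nat.cast_sub (by omega)]; simp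
        rw [hq1, hq2, show (2 * ((q : ℝ) - 1) + 2) = (m : ℝ) by rw [hq]; push_cast; ring, hθ, sin_pi] at this
        simpa [hc.ne', hs.ne'] using this
      have a1 : ((m : ℤ) - 2) / 2 = q - 1 := by omega
      have a2 : ((m : ℤ) - 1) / 2 = q - 1 := by omega
      rw [a1, a2, hS]
      simp
  · have hS : (Chebyshev.S K (q : ℤ)).eval t + (Chebyshev.S K ((q : ℤ) - 1)).eval t = 0 := by
      apply hK.inj
      rw [map_add, coe_S, coe_S, htR, map_zero]
      have := (S_sin (π / m) q).2
      rw [show (2 * (q : ℝ) + 1) = (m : ℝ) by rw [hq]; push_cast; ring, hθ, sin_pi] at this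
      simpa [hs.ne'] using this
    have a1 : ((m : ℤ) - 2) / 2 = q - 1 := by omega
    have a2 : ((m : ℤ) - 1) / 2 = q := by omega
    have a3 : ((m : ℤ) - 3) / 2 = q - 1 := by omega
    have a4 : ((m : ℤ)) / 2 = q := by omega
    rw [a1, a2, a3, a4, hS]
    simp

variable (cs : CoxeterSystem M W)

/-- The geometric representation -/
noncomputable def rep : W →* ((B → K) ≃ₗ[K] (B → K)) := cs.lift ⟨rf hK, rel hK⟩

theorem rep_simple (i : B) : rep hK cs (cs.simple i) = rf hK i := by
  exact cs.lift_apply_simple _ i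

theorem rf_apply (i : B) (v : B → K) : rf hK i v = v - co hK i v • al K i :=
  Module.reflection_apply ..

theorem dihedral {i j : B} (hij : i ≠ j) (k : ℕ) (hk : M i j = 0 ∨ k < M i j) :
    ∃ a b : K, 0 ≤ a ∧ 0 ≤ b ∧
      rep hK cs (cs.wordProd (CoxeterSystem.alternatingWord i j k)) (al K i) = a • al K i + b • al K j := by
  rw [cs.prod_alternatingWord_eq_mul_pow]
  have hcos : 0 ≤ cos (π / M i j) := by
    by_cases h0 : M i j = 0
    · simp [h0]
    have h1 : M i j ≠ 1 := M.off_diagonal i j hij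
    have hm2 : (2 : ℝ) ≤ M i j := by exact_mod_cast (show 2 ≤ M i j by omega)
    apply cos_nonneg_of_mem_Icc
    constructor
    · have : 0 ≤ π / M i j := by positivity
      linarith [pi_pos]
    · rw [div_le_iff₀ (by linarith)]; nlinarith [pi_pos]
  have hA : ∀ q : ℕ, M i j = 0 ∨ 2 * q + 1 ≤ M i j →
      (0 : ℝ) ≤ (Chebyshev.S ℝ (q : ℤ)).eval (2 * cos (π / M i j) * (2 * cos (π / M i j)) - 2) +
      (Chebyshev.S ℝ ((q : ℤ) - 1)).eval (2 * cos (π / M i j) * (2 * cos (π / M i j)) - 2) := by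
    intro q hq
    by_cases h0 : M i j = 0
    · rw [h0]; simp only [Nat.cast_zero, div_zero, cos_zero]; norm_num; positivity
    have h1 : M i j ≠ 1 := M.off_diagonal i j hij
    have hm2 : (2 : ℝ) ≤ M i j := by exact_mod_cast (show 2 ≤ M i j by omega)
    have hs : 0 < sin (π / M i j) := by
      apply sin_pos_of_pos_of_lt_pi (by positivity)
      rw [div_lt_iff₀ (by linarith)]; nlinarith [pi_pos]
    refine le_of_mul_le_mul_right ?_ hs
    rw [zero_mul, (S_sin _ q).2]
    apply sin_nonneg_of_nonneg_of_le_pi (by positivity)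
    have : (2 * q + 1 : ℝ) ≤ M i j := by exact_mod_cast hq.resolve_left h0
    rw [← mul_div_assoc, div_le_iff₀ (by linarith), mul_comm]
    exact mul_le_mul_of_nonneg_left this pi_pos.le
  have hB : ∀ q : ℕ, M i j = 0 ∨ 2 * q + 2 ≤ M i j →
      (0 : ℝ) ≤ (Chebyshev.S ℝ (q : ℤ)).eval (2 * cos (π / M i j) * (2 * cos (π / M i j)) - 2) * (2 * cos (π / M i j)) := by
    intro q hq
    by_cases h0 : M i j = 0
    · rw [h0]; simp only [Nat.cast_zero, div_zero, cos_zero]; norm_num; positivity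
    have h1 : M i j ≠ 1 := M.off_diagonal i j hij
    have hm2 : (2 : ℝ) ≤ M i j := by exact_mod_cast (show 2 ≤ M i j by omega)
    have hs : 0 < sin (π / M i j) := by
      apply sin_pos_of_pos_of_lt_pi (by positivity)
      rw [div_lt_iff₀ (by linarith)]; nlinarith [pi_pos]
    refine le_of_mul_le_mul_right ?_ hs
    rw [zero_mul, (S_sin _ q).1]
    apply sin_nonneg_of_nonneg_of_le_pi (by positivity)
    have : (2 * q + 2 : ℝ) ≤ M i j := by exact_mod_cast hq.resolve_left h0
    rw [← mul_div_assoc, div_le_iff₀ (by linarith), mul_comm]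
    exact mul_le_mul_of_nonneg_left this pi_pos.le
  have hc : hK.phi (-(co hK j (al K i))) = 2 * cos (π / M i j) := by
    rw [co_al, cf_symm]; simp [hK.hcf]
  rcases Nat.even_or_odd' k with ⟨q, rfl | rfl⟩
  · have e : 2 * q / 2 = q := by omega
    simp only [even_two, Even.mul_right, if_true, one_mul, e, map_pow, map_mul, rep_simple]
    refine ⟨_, _, ?_, ?_, Module.reflection_mul_reflection_pow_apply_self (co_al_self hK i) (co_al_self hK j) q⟩
    · apply hK.mono
      rw [map_add, coe_S, coe_S, tau]
      exact hA q (by omega)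
    · apply hK.mono
      rw [map_mul, hc, coe_S, tau]
      rcases q with _ | q
      · simp
      · have := hB q (by omega)
        push_cast
        simpa using this
  · have e : (2 * q + 1) / 2 = q := by omega
    have e' : ¬ Even (2 * q + 1) := by simp
    simp only [e', if_false, e, map_pow, map_mul, rep_simple]
    refine ⟨_, _, ?_, ?_, Module.reflection_mul_reflection_mul_reflection_pow_apply_self (co_al_self hK i) (co_al_self hK j) q⟩
    · apply hK.mono
      rw [map_add, coe_S, coe_S, tau]
      exact hA q (by omega)
    · apply hK.mono
      rw [map_mul, hc, coe_S, tau]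
      exact hB q (by omega)

end
end AltCox

end

section
open Polynomial Real

namespace AltCox
section
variable {B W : Type*} [Fintype B] [DecidableEq B] [Group W] {M : CoxeterMatrix B}
variable {K : Type} [Field K] [LinearOrder K] [IsStrictOrderedRing K]
variable (hK : GD M K) (cs : CoxeterSystem M W)
open CoxeterSystem

theorem rep_pos : ∀ (n : ℕ) (w : W) (i : B), cs.length w = n → ¬ cs.IsRightDescent w i →
    ∀ j, 0 ≤ rep hK cs w (al K i) j := by
  intro n
  induction n using Nat.strong_induction_on with
  | _ n ih =>
  intro w s hn hs
  by_cases hw : w = 1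
  · subst hw; intro j
    rw [map_one]
    simp only [LinearEquiv.coe_one, id_eq, al, Pi.single_apply]
    split_ifs <;> simp
  obtain ⟨t, ht⟩ := cs.exists_rightDescent_of_ne_one hw
  have hst : s ≠ t := by rintro rfl; exact hs ht
  let Q : ℕ → Prop := fun k => ∃ v, w = v * cs.wordProd (alternatingWord s t k) ∧ cs.length v + k = cs.length w
  have hQ0 : Q 0 := ⟨w, by simp [alternatingWord], by simp⟩
  have hQ1 : Q 1 := ⟨w * cs.simple t, by simp [alternatingWord], (cs.isRightDescent_iff.mp ht)⟩
  have hQbig : ¬ Q (n + 1) := by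
    rintro ⟨v, -, h⟩; omega
  classical
  have hex : ∃ k, ¬ Q k := ⟨_, hQbig⟩
  obtain ⟨k, hk⟩ : ∃ k, Nat.find hex = k + 1 := by
    apply Nat.exists_eq_succ_of_ne_zero
    intro h0
    exact Nat.find_spec hex (h0 ▸ hQ0)
  have hnk : ¬ Q (k + 1) := hk ▸ Nat.find_spec hex
  have hQk : ∀ m ≤ k, Q m := fun m hm => not_not.mp (Nat.find_min hex (by omega))
  have hk1 : 1 ≤ k := by
    by_contra h
    have : k = 0 := by omega
    subst this
    exact hnk hQ1
  have hkM : M s t = 0 ∨ k < M s t := by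
    by_contra! hcon
    obtain ⟨h0, h1⟩ := hcon
    obtain ⟨v, hv, hl⟩ := hQk _ h1
    apply hs
    obtain ⟨m, hm⟩ := Nat.exists_eq_succ_of_ne_zero h0
    have e := cs.wordProd_braidWord_eq s t
    unfold braidWord at e
    rw [M.symmetric t s] at e
    rw [e, hm, Nat.succ_eq_add_one, alternatingWord_succ, wordProd_concat] at hv
    unfold IsRightDescent
    have : w * cs.simple s = v * cs.wordProd (alternatingWord s t m) := by
      rw [hv]; simp [mul_assoc]
    rw [this]
    have l1 := cs.length_mul_le v (cs.wordProd (alternatingWord s t m))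
    have l2 := cs.length_wordProd_le (alternatingWord s t m)
    rw [length_alternatingWord] at l2
    omega
  obtain ⟨v, hv, hl⟩ := hQk k le_rfl
  obtain ⟨a, b, ha, hb, hab⟩ := dihedral hK cs hst k hkM
  -- both letters are ascents of v
  have h1 : ¬ cs.IsRightDescent v (if Even k then t else s) := by
    intro h
    apply hnk
    refine ⟨v * cs.simple (if Even k then t else s), ?_, ?_⟩
    · rw [alternatingWord_succ', wordProd_cons]
      rw [hv]; simp [mul_assoc]
    · have := cs.isRightDescent_iff.mp h
      omega
  have h2 : ¬ cs.IsRightDescent v (if Even k then s else t) := by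
    intro h
    obtain ⟨m, rfl⟩ : ∃ m, k = m + 1 := ⟨k - 1, by omega⟩
    have hlt := cs.isRightDescent_iff.mp h
    rw [alternatingWord_succ', wordProd_cons] at hv
    have e : (if Even (m + 1) then s else t) = (if Even m then t else s) := by
      by_cases hm : Even m <;> simp [hm, Nat.even_add_one]
    rw [e] at hlt
    have : w = (v * cs.simple (if Even m then t else s)) * cs.wordProd (alternatingWord s t m) := by
      rw [hv]; simp [mul_assoc]
    have l1 := cs.length_mul_le (v * cs.simple (if Even m then t else s)) (cs.wordProd (alternatingWord s t m))
    have l2 := cs.length_wordProd_le (alternatingWord s t m)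
    rw [length_alternatingWord] at l2
    rw [← this] at l1
    omega
  have h3 : ¬ cs.IsRightDescent v s ∧ ¬ cs.IsRightDescent v t := by
    by_cases hke : Even k <;> simp only [hke, if_true, if_false] at h1 h2
    · exact ⟨h2, h1⟩
    · exact ⟨h1, h2⟩
  have p1 := ih (cs.length v) (by omega) v s rfl h3.1
  have p2 := ih (cs.length v) (by omega) v t rfl h3.2
  intro j
  rw [hv, map_mul, LinearEquiv.mul_apply, hab, map_add, map_smul, map_smul]
  exact add_nonneg (mul_nonneg ha (p1 j)) (mul_nonneg hb (p2 j))

theorem rf_al (i : B) : rf hK i (al K i) = - al K i := by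
  rw [rf_apply, co_al_self, two_smul]; abel

theorem rep_nonneg {w : W} {i : B} (h : ¬ cs.IsRightDescent w i) (j : B) :
    0 ≤ rep hK cs w (al K i) j := rep_pos hK cs _ w i rfl h j

theorem rep_nonpos {w : W} {i : B} (h : cs.IsRightDescent w i) (j : B) :
    rep hK cs w (al K i) j ≤ 0 := by
  have h' := cs.isRightDescent_iff_not_isRightDescent_mul.mp h
  have := rep_nonneg hK cs h' j
  rw [map_mul, LinearEquiv.mul_apply, rep_simple, rf_al, map_neg] at this
  simpa using this

theorem al_ne (i : B) : al K i ≠ 0 := by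
  intro h; have := congrFun h i; simp [al] at this

theorem rep_not_desc {w : W} {i : B} (h : ∀ j, 0 ≤ rep hK cs w (al K i) j) : ¬ cs.IsRightDescent w i := by
  intro hd
  have : rep hK cs w (al K i) = 0 := by
    ext j; exact le_antisymm (rep_nonpos hK cs hd j) (h j)
  rw [LinearEquiv.map_eq_zero_iff] at this
  exact al_ne i this

theorem rep_inj {w : W} (h : ∀ v, rep hK cs w v = v) : w = 1 := by
  by_contra hw
  obtain ⟨t, ht⟩ := cs.exists_rightDescent_of_ne_one hw
  refine rep_not_desc hK cs (i := t) (w := w) ?_ ht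
  intro j; rw [h]
  simp only [al, Pi.single_apply]
  split_ifs <;> simp

/-- invariant form -/
noncomputable def bf (v w : B → K) : K := ∑ i, v i * co hK i w

theorem bf_symm (v w : B → K) : bf hK v w = bf hK w v := by
  simp only [bf, co, LinearMap.sum_apply, LinearMap.smul_apply, LinearMap.proj_apply, Finset.mul_sum, smul_eq_mul]
  rw [Finset.sum_comm]
  refine Finset.sum_congr rfl fun i _ => Finset.sum_congr rfl fun j _ => ?_
  rw [cf_symm hK j i]; ring

theorem bf_al (i : B) (w : B → K) : bf hK (al K i) w = co hK i w := by
  simp [bf, al, Pi.single_apply]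

theorem bf_sub (u v w : B → K) : bf hK u (v - w) = bf hK u v - bf hK u w := by
  simp [bf, mul_sub]

theorem bf_smul (c : K) (u v : B → K) : bf hK u (c • v) = c * bf hK u v := by
  simp only [bf, map_smul, smul_eq_mul, Finset.mul_sum]
  refine Finset.sum_congr rfl fun i _ => by ring

theorem bf_rf (i : B) (v w : B → K) : bf hK (rf hK i v) (rf hK i w) = bf hK v w := by
  rw [rf_apply, rf_apply, bf_sub, bf_smul, bf_symm hK _ w, bf_symm hK _ (al K i), bf_sub, bf_sub, bf_smul, bf_smul,
    bf_symm hK w (al K i), bf_al, bf_al, bf_al, co_al_self, bf_symm hK w v]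
  ring

theorem bf_rep (g : W) : ∀ v w : B → K, bf hK (rep hK cs g v) (rep hK cs g w) = bf hK v w := by
  induction g using cs.simple_induction_left with
  | one => intro v w; simp
  | mul_simple_left g i ih =>
    intro v w
    rw [map_mul, LinearEquiv.mul_apply, LinearEquiv.mul_apply, rep_simple, bf_rf, ih]

/-- the standard real form -/
noncomputable def realGD (M : CoxeterMatrix B) : GD M ℝ where
  phi := RingHom.id ℝ
  mono := fun _ h => h
  cf := fun i j => 2 * cos (π / M i j)
  hcf := fun _ _ => rfl

theorem exchange (s : B) : ∀ ω : List B, cs.IsRightDescent (cs.wordProd ω) s →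
    ∃ j < ω.length, cs.wordProd ω * cs.simple s = cs.wordProd (ω.eraseIdx j) := by
  intro ω
  let hK := realGD M
  induction ω with
  | nil => intro h; rw [wordProd_nil] at h; exact absurd h (cs.not_isRightDescent_one s)
  | cons i ω ih =>
    intro h
    by_cases h' : cs.IsRightDescent (cs.wordProd ω) s
    · obtain ⟨j, hj, e⟩ := ih h'
      refine ⟨j + 1, by simpa using hj, ?_⟩
      rw [List.eraseIdx_cons_succ, wordProd_cons, wordProd_cons, ← e, mul_assoc]
    · refine ⟨0, by simp, ?_⟩
      rw [List.eraseIdx_cons_zero]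
      have hp := rep_nonneg hK cs h'
      have hn := rep_nonpos hK cs h
      have h2K : (2 : ℝ) ≠ 0 := two_ne_zero
      set u := cs.wordProd ω with hu
      set β := rep hK cs u (al ℝ s) with hβ
      rw [wordProd_cons, map_mul] at hn
      simp only [LinearEquiv.mul_apply, rep_simple, ← hu, ← hβ, rf_apply] at hn
      have hβ2 : β = β i • al ℝ i := by
        ext j
        by_cases hj : j = i
        · subst hj; simp [al]
        · have := hn j
          have h3 := hp j
          simp [al, hj] at this ⊢
          exact le_antisymm this h3
      set c := β i
      have hcc : c * c = 1 := by
        have h2 := bf_rep hK cs u (al ℝ s) (al ℝ s)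
        rw [← hβ, hβ2, bf_smul, bf_symm, bf_smul, bf_al, co_al_self, bf_al, co_al_self] at h2
        apply mul_right_cancel₀ h2K
        linear_combination h2
      have key : ∀ v, rep hK cs ((cs.simple i) * u * cs.simple s * u⁻¹) v = v := by
        intro v
        simp only [map_mul, LinearEquiv.mul_apply, rep_simple]
        set z := rep hK cs u⁻¹ v with hz
        have hzv : rep hK cs u z = v := by
          rw [hz, ← LinearEquiv.mul_apply, ← map_mul]; simp
        have hco : co hK s z = c * co hK i v := by
          rw [← bf_al, ← bf_rep hK cs u, hzv, ← hβ, hβ2, bf_symm, bf_smul, bf_symm, bf_al]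
        rw [rf_apply hK s z, map_sub, map_smul, hzv, ← hβ, hco, hβ2, smul_smul]
        rw [show c * co hK i v * c = co hK i v by linear_combination (co hK i v) * hcc]
        rw [← rf_apply]
        exact Module.involutive_reflection (co_al_self hK i) v
      have := rep_inj hK cs key
      rw [wordProd_cons, ← hu]
      exact mul_inv_eq_one.mp this

theorem exists_word {T : Set B} {g : W} (hg : g ∈ cs.parabolic T) :
    ∃ ω : List B, (∀ i ∈ ω, i ∈ T) ∧ g = cs.wordProd ω ∧ cs.IsReduced ω := by
  induction hg using Subgroup.closure_induction_right with
  | one => exact ⟨[], by simp, by simp, by simp [CoxeterSystem.IsReduced]⟩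
  | mul_right x y hx hy ih =>
    obtain ⟨s, hs, rfl⟩ := hy
    obtain ⟨ω, h1, rfl, h3⟩ := ih
    by_cases hd : cs.IsRightDescent (cs.wordProd ω) s
    · obtain ⟨j, hj, e⟩ := exchange cs s ω hd
      refine ⟨ω.eraseIdx j, fun i hi => h1 i (List.mem_of_mem_eraseIdx hi), e, ?_⟩
      unfold CoxeterSystem.IsReduced at h3 ⊢
      rw [← e, List.length_eraseIdx_of_lt hj]
      have := cs.isRightDescent_iff.mp hd
      omega
    · refine ⟨ω ++ [s], ?_, by simp [wordProd_append], ?_⟩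
      · intro i hi
        rcases List.mem_append.mp hi with hi | hi
        · exact h1 i hi
        · simp at hi; subst hi; exact hs
      · unfold CoxeterSystem.IsReduced at h3 ⊢
        rw [wordProd_append, wordProd_singleton, cs.not_isRightDescent_iff.mp hd, h3]; simp
  | mul_inv_cancel x y hx hy ih =>
    obtain ⟨s, hs, rfl⟩ := hy
    rw [cs.inv_simple]
    obtain ⟨ω, h1, rfl, h3⟩ := ih
    by_cases hd : cs.IsRightDescent (cs.wordProd ω) s
    · obtain ⟨j, hj, e⟩ := exchange cs s ω hd
      refine ⟨ω.eraseIdx j, fun i hi => h1 i (List.mem_of_mem_eraseIdx hi), e, ?_⟩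
      unfold CoxeterSystem.IsReduced at h3 ⊢
      rw [← e, List.length_eraseIdx_of_lt hj]
      have := cs.isRightDescent_iff.mp hd
      omega
    · refine ⟨ω ++ [s], ?_, by simp [wordProd_append], ?_⟩
      · intro i hi
        rcases List.mem_append.mp hi with hi | hi
        · exact h1 i hi
        · simp at hi; subst hi; exact hs
      · unfold CoxeterSystem.IsReduced at h3 ⊢
        rw [wordProd_append, wordProd_singleton, cs.not_isRightDescent_iff.mp hd, h3]; simp

theorem exists_desc {T : Set B} {g : W} (hg : g ∈ cs.parabolic T) (h1 : g ≠ 1) :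
    ∃ t ∈ T, cs.IsRightDescent g t := by
  obtain ⟨ω, h2, rfl, h3⟩ := exists_word cs hg
  rcases List.eq_nil_or_concat ω with rfl | ⟨ω', s, rfl⟩
  · simp at h1
  · refine ⟨s, h2 s (by simp), ?_⟩
    unfold CoxeterSystem.IsReduced at h3
    unfold IsRightDescent
    rw [h3]
    rw [wordProd_concat, simple_mul_simple_cancel_right]
    have := cs.length_wordProd_le ω'
    simp only [List.length_concat]
    omega

theorem desc_word {w : W} (ω : List B) : (∀ i ∈ ω, cs.IsRightDescent w i) → cs.IsReduced ω →
    ∃ z, w = z * cs.wordProd ω ∧ cs.length z + ω.length = cs.length w := by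
  induction ω using List.reverseRecOn with
  | nil => intro _ _; exact ⟨w, by simp, by simp⟩
  | append_singleton ω s ih =>
    intro hd hr
    have hr' : cs.IsReduced ω := by
      have := hr.take ω.length
      simpa using this
    obtain ⟨z, hz, hl⟩ := ih (fun i hi => hd i (by simp [hi])) hr'
    obtain ⟨ζ, hζ, rfl⟩ := cs.exists_isReduced z
    unfold CoxeterSystem.IsReduced at hζ hr' hr
    have hs : cs.IsRightDescent (cs.wordProd (ζ ++ ω)) s := by
      rw [wordProd_append, ← hz]; exact hd s (by simp)
    obtain ⟨j, hj, e⟩ := exchange cs s _ hs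
    have hsl := cs.isRightDescent_iff.mp hs
    rw [wordProd_append, ← hz] at e hsl
    rw [List.length_append] at hj
    by_cases hjz : j < ζ.length
    · rw [List.eraseIdx_append_of_lt_length hjz, wordProd_append] at e
      refine ⟨cs.wordProd (ζ.eraseIdx j), ?_, ?_⟩
      · rw [wordProd_append, ← mul_assoc, ← e]; simp
      · have l1 := cs.length_wordProd_le (ζ.eraseIdx j)
        rw [List.length_eraseIdx_of_lt hjz] at l1
        have l2 := cs.length_mul_le (cs.wordProd (ζ.eraseIdx j)) (cs.wordProd ω)
        rw [← e] at l2
        simp only [List.length_append, List.length_singleton]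
        omega
    · exfalso
      rw [List.eraseIdx_append_of_length_le (by omega), wordProd_append, hz, mul_assoc] at e
      have e' := mul_left_cancel e
      rw [wordProd_append, wordProd_singleton, e'] at hr
      have l1 := cs.length_wordProd_le (ω.eraseIdx (j - ζ.length))
      rw [List.length_eraseIdx_of_lt (by omega)] at l1
      simp only [List.length_append, List.length_singleton] at hr
      omega

theorem desc_len {w : W} {D : Set B} (hD : ∀ i ∈ D, cs.IsRightDescent w i) {y : W} (hy : y ∈ cs.parabolic D) :
    cs.length (w * y) + cs.length y = cs.length w := by
  obtain ⟨ω, h1, h2, h3⟩ := exists_word cs (inv_mem hy)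
  obtain ⟨z, hz, hl⟩ := desc_word cs ω (fun i hi => hD i (h1 i hi)) h3
  unfold CoxeterSystem.IsReduced at h3
  rw [← h2] at hz h3
  have : w * y = z := by rw [hz]; simp
  rw [this, ← cs.length_inv y]
  omega

theorem exists_asc [Infinite W] (w : W) : ∃ i, ¬ cs.IsRightDescent w i := by
  by_contra! h
  have hb : ∀ y : W, cs.length y ≤ cs.length w := by
    intro y
    obtain ⟨ω, h3, h2⟩ := cs.exists_isReduced y
    obtain ⟨z, hz, hl⟩ := desc_word cs ω (fun i _ => h i) h3
    unfold CoxeterSystem.IsReduced at h3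
    rw [h2]; omega
  have hf := (List.finite_length_le B (cs.length w)).image cs.wordProd
  have : (Set.univ : Set W) ⊆ cs.wordProd '' {l | l.length ≤ cs.length w} := by
    intro y _
    obtain ⟨ω, h3, h2⟩ := cs.exists_isReduced y
    unfold CoxeterSystem.IsReduced at h3
    exact ⟨ω, by have := hb y; rw [h2] at this; simp only [Set.mem_setOf_eq]; omega, h2.symm⟩
  exact Set.infinite_univ (hf.subset this)

end
end AltCox

end

section
open Polynomial

namespace AltCox

theorem irr_cyc (p N : ℕ) (hp : p.Prime) (hN : 0 < N) (hpN : ¬ p ∣ N) (ζ : ℂ) (hζ : IsPrimitiveRoot ζ N) :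
    Irreducible (cyclotomic p (IntermediateField.adjoin ℚ {ζ})) := by
  set L := IntermediateField.adjoin ℚ {ζ} with hL
  have : NeZero p := ⟨hp.ne_zero⟩
  obtain ⟨η, hη⟩ : ∃ η : ℂ, IsPrimitiveRoot η p := ⟨_, Complex.isPrimitiveRoot_exp p hp.ne_zero⟩
  have hint : IsIntegral ℚ ζ := (hζ.isIntegral hN).tower_top
  have hintη : IsIntegral L η := (hη.isIntegral hp.pos).tower_top
  have hfr : Module.finrank ℚ L = N.totient := by
    rw [hL, IntermediateField.adjoin.finrank hint, ← cyclotomic_eq_minpoly_rat hζ hN, natDegree_cyclotomic]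
  have : FiniteDimensional ℚ L := IntermediateField.adjoin.finiteDimensional hint
  have : FiniteDimensional L (IntermediateField.adjoin L {η}) := IntermediateField.adjoin.finiteDimensional hintη
  have : FiniteDimensional ℚ (IntermediateField.adjoin L {η}) := FiniteDimensional.trans ℚ L _
  let ζ' : IntermediateField.adjoin L {η} := algebraMap L _ ⟨ζ, IntermediateField.mem_adjoin_simple_self ℚ ζ⟩
  let η' : IntermediateField.adjoin L {η} := ⟨η, IntermediateField.mem_adjoin_simple_self L η⟩
  have hζ' : IsPrimitiveRoot ζ' N :=
    IsPrimitiveRoot.of_map_of_injective (f := algebraMap (IntermediateField.adjoin L {η}) ℂ) hζ Subtype.val_injective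
  have hη' : IsPrimitiveRoot η' p :=
    IsPrimitiveRoot.of_map_of_injective (f := algebraMap (IntermediateField.adjoin L {η}) ℂ) hη Subtype.val_injective
  have hcop : Nat.Coprime N p := (Nat.coprime_comm.mp ((Nat.Prime.coprime_iff_not_dvd hp).mpr hpN))
  have key := hζ'.lcm_totient_le_finrank (K := ℚ) hη' (cyclotomic.irreducible_rat (Nat.lcm_pos hN hp.pos))
  rw [hcop.lcm_eq_mul, Nat.totient_mul hcop, ← Module.finrank_mul_finrank ℚ L, hfr,
    IntermediateField.adjoin.finrank hintη] at key
  have key2 := Nat.le_of_mul_le_mul_left key (Nat.totient_pos.mpr hN)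
  have hdvd : minpoly L η ∣ cyclotomic p L := by
    apply minpoly.dvd
    have := hη.isRoot_cyclotomic hp.pos
    rwa [IsRoot, ← map_cyclotomic p (algebraMap L ℂ), eval_map_algebraMap] at this
  have : minpoly L η = cyclotomic p L := by
    apply Eq.symm; apply eq_of_monic_of_dvd_of_natDegree_le (minpoly.monic hintη) (cyclotomic.monic p L) hdvd
    rw [natDegree_cyclotomic]; exact key2
  rw [← this]
  exact minpoly.irreducible hintη

section
variable {B W : Type*} [Fintype B] [DecidableEq B] [Group W] {M : CoxeterMatrix B}

theorem exists_gd (p : ℕ) (hp : p.Prime) (hodd : Odd p) (hfree : M.IsPFree p) :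
    ∃ K : Subfield ℝ, Nonempty (GD M K) ∧ Irreducible (cyclotomic p K) := by
  let N := 2 * ∏ i, ∏ j, (if M i j = 0 then 1 else M i j)
  have hN : 0 < N := by
    refine Nat.mul_pos two_pos (Finset.prod_pos fun i _ => Finset.prod_pos fun j _ => ?_)
    split_ifs with h
    · exact one_pos
    · exact Nat.pos_of_ne_zero h
  have hpN : ¬ p ∣ N := by
    intro h
    rcases (Nat.Prime.dvd_mul hp).mp h with h | h
    · have := (Nat.prime_dvd_prime_iff_eq hp Nat.prime_two).mp h
      subst this; exact absurd hodd (by decide)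
    · obtain ⟨i, -, h⟩ := (Prime.dvd_finsetProd_iff hp.prime _).mp h
      obtain ⟨j, -, h⟩ := (Prime.dvd_finsetProd_iff hp.prime _).mp h
      split_ifs at h with h0
      · exact hp.one_lt.ne' (Nat.dvd_one.mp h)
      · exact h0 (hfree i j h)
  have hdvd : ∀ i j, M i j ≠ 0 → 2 * M i j ∣ N := by
    intro i j h
    refine mul_dvd_mul_left 2 ?_
    have h1 := Finset.dvd_prod_of_mem (fun j => if M i j = 0 then 1 else M i j) (Finset.mem_univ j)
    have h2 := Finset.dvd_prod_of_mem (fun i => ∏ j, if M i j = 0 then 1 else M i j) (Finset.mem_univ i)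
    simp only [h, if_false] at h1
    exact h1.trans h2
  set ζ := Complex.exp (2 * Real.pi * Complex.I / N) with hζd
  have hζ : IsPrimitiveRoot ζ N := Complex.isPrimitiveRoot_exp N hN.ne'
  have hirr := irr_cyc p N hp hN hpN ζ hζ
  set L := IntermediateField.adjoin ℚ {ζ} with hL
  have hζL : ζ ∈ L := IntermediateField.mem_adjoin_simple_self ℚ ζ
  let K : Subfield ℝ := L.toSubfield.comap Complex.ofRealHom
  have hKm : ∀ i j, 2 * Real.cos (Real.pi / M i j) ∈ K := by
    intro i j
    show Complex.ofRealHom _ ∈ L.toSubfield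
    by_cases h0 : M i j = 0
    · simp only [h0, Nat.cast_zero, div_zero, Real.cos_zero, mul_one]
      rw [map_ofNat]
      exact ofNat_mem _ 2
    obtain ⟨q, hq⟩ := hdvd i j h0
    have e : (Complex.ofRealHom (2 * Real.cos (Real.pi / M i j)) : ℂ) = ζ ^ q + (ζ ^ q)⁻¹ := by
      have h0' : (M i j : ℂ) ≠ 0 := by exact_mod_cast h0
      have hNC : (N : ℂ) ≠ 0 := by exact_mod_cast hN.ne'
      have hq0 : q ≠ 0 := by rintro rfl; simp at hq; omega
      have hqC : (q : ℂ) ≠ 0 := by exact_mod_cast hq0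
      have e1 : ζ ^ q = Complex.exp ((Real.pi / M i j : ℂ) * Complex.I) := by
        rw [hζd, ← Complex.exp_nat_mul]
        congr 1
        have : (N : ℂ) = 2 * M i j * q := by rw [hq]; push_cast; ring
        rw [this]; field_simp
      rw [e1, ← Complex.exp_neg]
      simp only [map_mul, Complex.ofRealHom_eq_coe, Complex.ofReal_cos, Complex.ofReal_ofNat, Complex.ofReal_div, Complex.ofReal_natCast]
      rw [Complex.two_cos, neg_mul]
    rw [e]
    exact L.add_mem (L.pow_mem hζL q) (L.inv_mem (L.pow_mem hζL q))
  refine ⟨K, ⟨⟨K.subtype, fun x h => h, fun i j => ⟨_, hKm i j⟩, fun i j => rfl⟩⟩, ?_⟩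
  let f : K →+* L := 
    { toFun := fun x => ⟨((x : ℝ) : ℂ), x.2⟩
      map_one' := by apply Subtype.ext; simp
      map_mul' := by intro x y; apply Subtype.ext; simp
      map_zero' := by apply Subtype.ext; simp
      map_add' := by intro x y; apply Subtype.ext; simp }
  apply (cyclotomic.monic p K).irreducible_of_irreducible_map f
  rwa [map_cyclotomic]

theorem not_dvd_aux {K : Type} [Field K] [LinearOrder K] [IsStrictOrderedRing K] (hK : GD M K)
    (cs : CoxeterSystem M W) (p : ℕ) (hp : p.Prime) (hirr : Irreducible (cyclotomic p K))
    (T : Set B) [Finite (cs.parabolic T)] (hT : T.ncard + 2 ≤ p) : ¬ p ∣ Nat.card (cs.parabolic T) := by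
  intro hdvd
  have := Fact.mk hp
  obtain ⟨g, hg⟩ := exists_prime_orderOf_dvd_card' p hdvd
  have hgp : (g : W) ^ p = 1 := by
    rw [← hg, ← Subgroup.coe_pow, pow_orderOf_eq_one]; rfl
  have hg1 : (g : W) ≠ 1 := by
    intro h
    have : g = 1 := Subtype.ext h
    rw [this, orderOf_one] at hg
    exact hp.one_lt.ne hg
  obtain ⟨t, htT, htd⟩ := exists_desc cs g.2 hg1
  let U : Submodule K (B → K) := Submodule.span K (al K '' T)
  have hU : ∀ x ∈ cs.parabolic T, ∀ v ∈ U, rep hK cs x v ∈ U := by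
    intro x hx
    obtain ⟨ω, h1, rfl, -⟩ := exists_word cs hx
    clear hx
    induction ω with
    | nil => intro v hv; simpa using hv
    | cons i ω ih =>
      intro v hv
      rw [cs.wordProd_cons, map_mul, LinearEquiv.mul_apply, rep_simple, rf_apply]
      refine U.sub_mem (ih (fun i hi => h1 i (by simp [hi])) v hv) (U.smul_mem _ (Submodule.subset_span ⟨i, h1 i (by simp), rfl⟩))
  let f : Module.End K U := LinearMap.restrict (rep hK cs (g : W)).toLinearMap (hU g g.2)
  have hfp : ∀ n : ℕ, ∀ v : U, (((f ^ n) v : U) : B → K) = rep hK cs ((g : W) ^ n) v := by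
    intro n
    induction n with
    | zero => intro v; simp
    | succ n ih =>
      intro v
      rw [pow_succ', pow_succ', map_mul, LinearEquiv.mul_apply, ← ih]
      rfl
  have hf1 : f ^ p = 1 := by
    apply LinearMap.ext
    intro v
    apply Subtype.ext
    rw [hfp, hgp, map_one]; rfl
  have hdim : Module.finrank K U ≤ T.ncard := by
    have : Fintype ↑(al K '' T) := Fintype.ofFinite _
    have h1 := finrank_span_le_card (R := K) (al K '' T)
    rw [← Set.ncard_eq_toFinset_card'] at h1
    exact h1.trans (Set.ncard_image_le (Set.toFinite T))
  have hmin : minpoly K f ∣ X - 1 := by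
    have h1 : minpoly K f ∣ cyclotomic p K * (X - 1) := by
      rw [cyclotomic_prime_mul_X_sub_one]
      apply minpoly.dvd
      simp [hf1]
    refine IsCoprime.dvd_of_dvd_mul_left ?_ h1
    refine ((hirr.coprime_iff_not_dvd).mpr ?_).symm
    intro h2
    have h3 := h2.trans (LinearMap.minpoly_dvd_charpoly f)
    have h4 := natDegree_le_of_dvd h3 (LinearMap.charpoly_monic f).ne_zero
    rw [LinearMap.charpoly_natDegree, natDegree_cyclotomic, Nat.totient_prime hp] at h4
    omega
  have hf : f = 1 := by
    obtain ⟨q, hq⟩ := hmin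
    have := congrArg (aeval f) hq
    have h0 : aeval f (minpoly K f) = 0 := minpoly.aeval K f
    rw [map_mul, h0, zero_mul] at this
    simpa [sub_eq_zero] using this
  have hgt : rep hK cs (g : W) (al K t) = al K t := by
    have := hfp 1 ⟨al K t, Submodule.subset_span ⟨t, htT, rfl⟩⟩
    rw [hf] at this
    simpa using this.symm
  have := rep_nonpos hK cs htd t
  rw [hgt] at this
  simp [al] at this
  exact absurd this (not_le.mpr one_pos)

theorem not_dvd_card (cs : CoxeterSystem M W) (p : ℕ) (hp : p.Prime) (hodd : Odd p) (hfree : M.IsPFree p)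
    (T : Set B) [Finite (cs.parabolic T)] (hT : T.ncard + 2 ≤ p) : ¬ p ∣ Nat.card (cs.parabolic T) := by
  obtain ⟨K, ⟨hK⟩, hirr⟩ := exists_gd p hp hodd hfree
  exact not_dvd_aux hK cs p hp hirr T hT
end
end AltCox

end

section
namespace AltCox
section
variable {F W : Type} [Field F] [Group W]

noncomputable instance modX (A : Subgroup W) : Module (MonoidAlgebra F A) (MonoidAlgebra F W) :=
  Module.compHom _ (MonoidAlgebra.mapDomainRingHom F A.subtype)

theorem smulX (A : Subgroup W) (r : MonoidAlgebra F A) (x : MonoidAlgebra F W) :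
    r • x = MonoidAlgebra.mapDomainRingHom F A.subtype r * x := rfl

theorem single_smulX (A : Subgroup W) (a : A) (c : F) (x : MonoidAlgebra F W) :
    (MonoidAlgebra.single a c : MonoidAlgebra F A) • x = MonoidAlgebra.single (a : W) c * x := by
  rw [smulX]; congr 1
  simp [MonoidAlgebra.mapDomainRingHom]

/-- right multiplication -/
noncomputable def rmul (A : Subgroup W) (y : MonoidAlgebra F W) :
    MonoidAlgebra F W →ₗ[MonoidAlgebra F A] MonoidAlgebra F W where
  toFun := fun x => x * y
  map_add' := fun a b => add_mul a b y
  map_smul' := fun r x => by rw [smulX, RingHom.id_apply, smulX, mul_assoc]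

end

section
variable {B W : Type} [Fintype B] [DecidableEq B] [Group W] {M : CoxeterMatrix B}
variable (F : Type) [Field F] (cs : CoxeterSystem M W)

/-- sign in the field -/
noncomputable def sg : W →* F :=
  ((Int.castRingHom F : ℤ →+* F) : ℤ →* F).comp ((Units.coeHom ℤ).comp cs.signHom)

theorem signHom_simple (i : B) : cs.signHom (cs.simple i) = -1 := cs.lift_apply_simple _ i

theorem sg_simple (i : B) : sg F cs (cs.simple i) = -1 := by
  simp [sg, signHom_simple]

theorem sg_mul_self (w : W) : sg F cs w * sg F cs w = 1 := by
  simp only [sg, MonoidHom.comp_apply, Units.coeHom_apply]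
  rcases Int.units_eq_one_or (cs.signHom w) with h | h <;> simp [h]

theorem sg_ker {w : W} (h : w ∈ cs.signHom.ker) : sg F cs w = 1 := by
  rw [MonoidHom.mem_ker] at h
  simp [sg, h]

theorem sg_not_ker {w : W} (h : w ∉ cs.signHom.ker) : sg F cs w = -1 := by
  rw [MonoidHom.mem_ker] at h
  have := (Int.units_eq_one_or (cs.signHom w)).resolve_left h
  simp [sg, this]

open Classical in
/-- elements of a finite parabolic -/
noncomputable def pf (T : Finset B) : Finset W :=
  if h : ((cs.parabolic (T : Set B) : Subgroup W) : Set W).Finite then h.toFinset else ∅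

variable {cs} in
theorem mem_pf {T : Finset B} (hT : Finite (cs.parabolic (T : Set B))) {v : W} :
    v ∈ pf cs T ↔ v ∈ cs.parabolic (T : Set B) := by
  have h : ((cs.parabolic (T : Set B) : Subgroup W) : Set W).Finite := Set.toFinite _
  rw [pf, dif_pos h]; simp

variable {cs} in
theorem card_pf {T : Finset B} (hT : Finite (cs.parabolic (T : Set B))) :
    (pf cs T).card = Nat.card (cs.parabolic (T : Set B)) := by
  have h : ((cs.parabolic (T : Set B) : Subgroup W) : Set W).Finite := Set.toFinite _
  rw [pf, dif_pos h, ← Set.ncard_eq_toFinset_card _ h]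
  rfl

/-- the alternating sum -/
noncomputable def hh (T : Finset B) : MonoidAlgebra F W :=
  ∑ v ∈ pf cs T, MonoidAlgebra.single v (sg F cs v)

/-- V_T -/
noncomputable def VV (T : Finset B) : Submodule (MonoidAlgebra F cs.signHom.ker) (MonoidAlgebra F W) where
  carrier := {x | ∀ t ∈ T, x * MonoidAlgebra.single (cs.simple t) 1 = -x}
  add_mem' := by
    intro a b ha hb t ht
    rw [add_mul, ha t ht, hb t ht]; abel
  zero_mem' := by intro t _; simp
  smul_mem' := by
    intro r x hx t ht
    rw [smulX, mul_assoc, hx t ht, mul_neg]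

theorem mem_VV {T : Finset B} {x : MonoidAlgebra F W} :
    x ∈ VV F cs T ↔ ∀ t ∈ T, x * MonoidAlgebra.single (cs.simple t) 1 = -x := Iff.rfl

theorem VV_anti {T T' : Finset B} (h : T ⊆ T') : VV F cs T' ≤ VV F cs T := fun _ hx t ht => hx t (h ht)

theorem mul_mem_VV {T : Finset B} {x : MonoidAlgebra F W} (hx : x ∈ VV F cs T) (y : MonoidAlgebra F W) :
    y * x ∈ VV F cs T := fun t ht => by rw [mul_assoc, hx t ht, mul_neg]

theorem smul_mem_VV {T : Finset B} {x : MonoidAlgebra F W} (hx : x ∈ VV F cs T) (c : F) :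
    c • x ∈ VV F cs T := fun t ht => by rw [smul_mul_assoc, hx t ht, smul_neg]

theorem VV_par {T : Finset B} {x : MonoidAlgebra F W} (hx : x ∈ VV F cs T) {v : W}
    (hv : v ∈ cs.parabolic (T : Set B)) : x * MonoidAlgebra.single v 1 = sg F cs v • x := by
  obtain ⟨ω, h1, rfl, -⟩ := exists_word cs hv
  clear hv
  induction ω with
  | nil => simp [← MonoidAlgebra.one_def]
  | cons i ω ih =>
    have hi : i ∈ T := by simpa using h1 i (by simp)
    rw [cs.wordProd_cons, show (MonoidAlgebra.single (cs.simple i * cs.wordProd ω) (1 : F)) =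
      MonoidAlgebra.single (cs.simple i) 1 * MonoidAlgebra.single (cs.wordProd ω) 1 by
        rw [MonoidAlgebra.single_mul_single, one_mul], ← mul_assoc, hx i hi, neg_mul,
      ih (fun i hi => h1 i (by simp [hi])), map_mul, sg_simple]
    simp

theorem VV_hh {T : Finset B} (hT : Finite (cs.parabolic (T : Set B))) {x : MonoidAlgebra F W} (hx : x ∈ VV F cs T) :
    x * hh F cs T = ((pf cs T).card : F) • x := by
  rw [hh, Finset.mul_sum]
  rw [Finset.sum_congr rfl (g := fun _ => x)]
  · simp [Nat.cast_smul_eq_nsmul]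
  · intro v hv
    have e : MonoidAlgebra.single v (sg F cs v) = sg F cs v • MonoidAlgebra.single v (1 : F) := by
      simp [MonoidAlgebra.smul_single]
    rw [e, mul_smul_comm, VV_par F cs hx ((mem_pf hT).mp hv),
      smul_smul, sg_mul_self, one_smul]

theorem hh_mem {T : Finset B} (hT : Finite (cs.parabolic (T : Set B))) : hh F cs T ∈ VV F cs T := by
  intro t ht
  rw [hh, Finset.sum_mul, ← Finset.sum_neg_distrib]
  refine Finset.sum_nbij' (fun v => v * cs.simple t) (fun v => v * cs.simple t) ?_ ?_ ?_ ?_ ?_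
  · intro v hv
    rw [mem_pf hT] at hv ⊢
    exact mul_mem hv (Subgroup.subset_closure ⟨t, ht, rfl⟩)
  · intro v hv
    rw [mem_pf hT] at hv ⊢
    exact mul_mem hv (Subgroup.subset_closure ⟨t, ht, rfl⟩)
  · intro v _; simp
  · intro v _; simp
  · intro v _
    rw [MonoidAlgebra.single_mul_single, map_mul, sg_simple, ← MonoidAlgebra.single_neg]; simp

open Classical in
/-- descent set -/
noncomputable def ds (w : W) : Finset B := Finset.univ.filter fun i => cs.IsRightDescent w i

variable {cs} in
theorem mem_ds {w : W} {i : B} : i ∈ ds cs w ↔ cs.IsRightDescent w i := by simp [ds]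

/-- adapted basis -/
noncomputable def bb (w : W) : MonoidAlgebra F W := MonoidAlgebra.single w 1 * hh F cs (ds cs w)

variable (hfin : ∀ w : W, Finite (cs.parabolic (ds cs w : Set B)))
include hfin

theorem bb_mem {T : Finset B} {w : W} (h : T ⊆ ds cs w) : bb F cs w ∈ VV F cs T :=
  VV_anti F cs h (mul_mem_VV F cs (hh_mem F cs (hfin w)) _)

open Classical in
theorem bb_coeff (w u : W) (h : cs.length w ≤ cs.length u) : (bb F cs w).coeff u = if u = w then 1 else 0 := by
  rw [bb, MonoidAlgebra.coeff_single_mul_apply, one_mul, hh, MonoidAlgebra.coeff_sum, Finsupp.finsetSum_apply]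
  simp only [MonoidAlgebra.coeff_single, Finsupp.single_apply]
  rw [Finset.sum_ite_eq']
  by_cases hu : u = w
  · subst hu
    simp [mem_pf (hfin u), one_mem]
  · rw [if_neg hu, if_neg]
    rw [mem_pf (hfin w)]
    intro hm
    have := desc_len cs (w := w) (fun i hi => mem_ds.mp (by simpa using hi)) hm
    rw [mul_inv_cancel_left] at this
    have h0 : cs.length (w⁻¹ * u) = 0 := by omega
    rw [cs.length_eq_zero_iff] at h0
    exact hu (inv_mul_eq_one.mp h0).symm

theorem VV_span {T : Finset B} : ∀ (N : ℕ) (x : MonoidAlgebra F W), x ∈ VV F cs T →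
    (∀ u, x.coeff u ≠ 0 → cs.length u < N) → x ∈ Submodule.span F (bb F cs '' {w | T ⊆ ds cs w}) := by
  intro N
  induction N with
  | zero =>
    intro x _ h
    have : x = 0 := by
      ext u; by_contra hu; exact absurd (h u hu) (by omega)
    rw [this]; exact zero_mem _
  | succ N ih =>
    intro x hx h
    classical
    let P := x.coeff.support.filter (fun w => cs.length w = N)
    have hP : ∀ w ∈ P, T ⊆ ds cs w := by
      intro w hw t ht
      obtain ⟨hw1, hw2⟩ := Finset.mem_filter.mp hw
      rw [Finsupp.mem_support_iff] at hw1
      rw [mem_ds]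
      have e := congrArg (fun y => y.coeff w) (hx t ht)
      simp only [MonoidAlgebra.coeff_mul_single_apply, mul_one, MonoidAlgebra.coeff_neg, Finsupp.neg_apply, cs.inv_simple] at e
      have h1 : x.coeff (w * cs.simple t) ≠ 0 := by rw [e]; simpa using hw1
      have := h _ h1
      rcases cs.length_mul_simple w t with h2 | h2
      · omega
      · unfold CoxeterSystem.IsRightDescent; omega
    have hsum : ∑ w ∈ P, x.coeff w • bb F cs w ∈ Submodule.span F (bb F cs '' {w | T ⊆ ds cs w}) :=
      Submodule.sum_mem _ fun w hw => Submodule.smul_mem _ _ (Submodule.subset_span ⟨w, hP w hw, rfl⟩)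
    have := ih (x - ∑ w ∈ P, x.coeff w • bb F cs w) ?_ ?_
    · have h3 := Submodule.add_mem _ this hsum
      simpa using h3
    · refine Submodule.sub_mem _ hx (Submodule.sum_mem _ fun w hw => smul_mem_VV F cs (bb_mem F cs hfin (hP w hw)) _)
    · intro u hu
      by_contra hcon
      apply hu
      rw [MonoidAlgebra.coeff_sub, Finsupp.sub_apply, MonoidAlgebra.coeff_sum, Finsupp.finsetSum_apply]
      have e : ∀ w ∈ P, (x.coeff w • bb F cs w).coeff u = if u = w then x.coeff w else 0 := by
        intro w hw
        rw [MonoidAlgebra.coeff_smul_apply, bb_coeff F cs hfin w u (by have := (Finset.mem_filter.mp hw).2; omega)]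
        simp
      rw [Finset.sum_congr rfl e, Finset.sum_ite_eq]
      by_cases hxu : x.coeff u = 0
      · simp [hxu]
      · have := h u hxu
        rw [if_pos, sub_self]
        exact Finset.mem_filter.mpr ⟨Finsupp.mem_support_iff.mpr hxu, by omega⟩

theorem bb_inj (l : W →₀ F) (h : Finsupp.linearCombination F (bb F cs) l = 0) : l = 0 := by
  by_contra hl
  classical
  obtain ⟨w, hw, hmax⟩ := Finset.exists_max_image l.support cs.length (Finsupp.support_nonempty_iff.mpr hl)
  have e := congrArg (fun y => y.coeff w) h
  simp only [Finsupp.linearCombination_apply, Finsupp.sum, MonoidAlgebra.coeff_sum, Finsupp.finsetSum_apply] at e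
  rw [Finset.sum_congr rfl (g := fun v => if w = v then l v else 0)] at e
  · rw [Finset.sum_ite_eq, if_pos hw] at e
    exact (Finsupp.mem_support_iff.mp hw) (by simpa using e)
  · intro v hv
    rw [MonoidAlgebra.coeff_smul_apply, bb_coeff F cs hfin v w (hmax v hv)]
    simp

theorem VV_span' {T : Finset B} {x : MonoidAlgebra F W} (hx : x ∈ VV F cs T) :
    x ∈ Submodule.span F (bb F cs '' {w | T ⊆ ds cs w}) := by
  refine VV_span F cs hfin (x.coeff.support.sup cs.length + 1) x hx ?_
  intro u hu
  have := Finset.le_sup (f := cs.length) (Finsupp.mem_support_iff.mpr hu)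
  omega

theorem lattice (T J : Finset B) (s : B) :
    VV F cs (insert s T) ⊓ ⨆ j ∈ J, VV F cs (insert j T) ≤ ⨆ j ∈ J, VV F cs (insert j (insert s T)) := by
  rintro x ⟨h1, h2⟩
  have h1' := VV_span' F cs hfin h1
  have h2' : x ∈ Submodule.span F (bb F cs '' {w | ∃ j ∈ J, insert j T ⊆ ds cs w}) := by
    clear h1' h1
    induction h2 using Submodule.iSup_induction' with
    | mem j x hx =>
      by_cases hj : j ∈ J
      · simp only [hj, iSup_pos] at hx
        refine Submodule.span_mono (Set.image_mono ?_) (VV_span' F cs hfin hx)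
        intro w hw; exact ⟨j, hj, hw⟩
      · simp [hj] at hx
        rw [hx]; exact zero_mem _
    | zero => exact zero_mem _
    | add x y _ _ hx hy => exact add_mem hx hy
  rw [Finsupp.mem_span_image_iff_linearCombination] at h1' h2'
  obtain ⟨l1, hl1, rfl⟩ := h1'
  obtain ⟨l2, hl2, e⟩ := h2'
  have : l2 = l1 := by
    rw [← sub_eq_zero]
    apply bb_inj F cs hfin
    rw [map_sub, e, sub_self]
  subst this
  rw [Finsupp.linearCombination_apply]
  refine Submodule.sum_mem _ fun w hw => ?_
  have a1 : insert s T ⊆ ds cs w := hl1 hw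
  obtain ⟨j, hj, a2⟩ := hl2 hw
  refine Submodule.mem_iSup_of_mem j (Submodule.mem_iSup_of_mem hj ?_)
  refine smul_mem_VV F cs (bb_mem F cs hfin ?_) _
  exact Finset.insert_subset (a2 (by simp)) a1

end
end AltCox

end

section
namespace AltCox
section
variable {B W : Type} [Fintype B] [DecidableEq B] [Group W] {M : CoxeterMatrix B}
variable (F : Type) [Field F] (cs : CoxeterSystem M W)

theorem simple_mul_hh {T : Finset B} (hT : Finite (cs.parabolic (T : Set B))) {t : B} (ht : t ∈ T) :
    MonoidAlgebra.single (cs.simple t) 1 * hh F cs T = - hh F cs T := by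
  rw [hh, Finset.mul_sum, ← Finset.sum_neg_distrib]
  have key : ∀ v ∈ pf cs T, cs.simple t * v ∈ pf cs T := by
    intro v hv
    rw [mem_pf hT] at hv ⊢
    exact mul_mem (Subgroup.subset_closure ⟨t, ht, rfl⟩) hv
  refine Finset.sum_nbij' (fun v => cs.simple t * v) (fun v => cs.simple t * v) key key ?_ ?_ ?_
  · intro v _; simp
  · intro v _; simp
  · intro v _
    rw [MonoidAlgebra.single_mul_single, map_mul, sg_simple, ← MonoidAlgebra.single_neg]; simp

/-- projection onto V_T -/
noncomputable def prj (T : Finset B) (hT : Finite (cs.parabolic (T : Set B))) :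
    MonoidAlgebra F W →ₗ[MonoidAlgebra F cs.signHom.ker] VV F cs T :=
  (rmul cs.signHom.ker (((pf cs T).card : F)⁻¹ • hh F cs T)).codRestrict (VV F cs T)
    (fun x => mul_mem_VV F cs (smul_mem_VV F cs (hh_mem F cs hT) _) x)

theorem prj_coe (T : Finset B) (hT : Finite (cs.parabolic (T : Set B))) (hc : ((pf cs T).card : F) ≠ 0)
    (x : VV F cs T) : prj F cs T hT (x : MonoidAlgebra F W) = x := by
  apply Subtype.ext
  change (x : MonoidAlgebra F W) * (((pf cs T).card : F)⁻¹ • hh F cs T) = x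
  rw [mul_smul_comm, VV_hh F cs hT x.2, smul_smul, inv_mul_cancel₀ hc, one_smul]

/-- the basis map -/
noncomputable def twoMap (s : B) : (MonoidAlgebra F cs.signHom.ker × MonoidAlgebra F cs.signHom.ker)
    →ₗ[MonoidAlgebra F cs.signHom.ker] MonoidAlgebra F W :=
  LinearMap.coprod (LinearMap.toSpanSingleton _ _ 1) (LinearMap.toSpanSingleton _ _ (MonoidAlgebra.single (cs.simple s) 1))

theorem coe_mapDomain (A : Subgroup W) (r : MonoidAlgebra F A) (a : A) :
    (MonoidAlgebra.mapDomainRingHom F A.subtype r).coeff a = r.coeff a :=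
  Finsupp.mapDomain_apply (f := A.subtype) Subtype.val_injective r.coeff a

theorem coe_mapDomain' (A : Subgroup W) (r : MonoidAlgebra F A) (w : W) (hw : w ∉ A) :
    (MonoidAlgebra.mapDomainRingHom F A.subtype r).coeff w = 0 :=
  Finsupp.mapDomain_of_notMem_range (f := A.subtype) r.coeff w (by simpa using hw)

theorem mul_simple_ker {w : W} (s : B) : w * cs.simple s ∈ cs.signHom.ker ↔ w ∉ cs.signHom.ker := by
  rw [MonoidHom.mem_ker, MonoidHom.mem_ker, map_mul, signHom_simple]
  rcases Int.units_eq_one_or (cs.signHom w) with h | h <;> rw [h] <;> decide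

theorem twoMap_bij (s : B) : Function.Bijective (twoMap F cs s) := by
  constructor
  · rw [injective_iff_map_eq_zero]
    rintro ⟨r1, r2⟩ h
    simp only [twoMap, LinearMap.coprod_apply, LinearMap.toSpanSingleton_apply, smulX, mul_one] at h
    have h1 : r1 = 0 := by
      ext a
      have := congrArg (fun y => y.coeff (a : W)) h
      simp only [MonoidAlgebra.coeff_add, Finsupp.add_apply, coe_mapDomain, MonoidAlgebra.coeff_mul_single_apply, mul_one, cs.inv_simple] at this
      rw [coe_mapDomain' _ _ _ _ (by rw [mul_simple_ker]; simpa using a.2)] at this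
      simpa using this
    subst h1
    have h2 : r2 = 0 := by
      ext a
      have := congrArg (fun y => y.coeff (a * cs.simple s : W)) h
      simp only [map_zero, zero_add, MonoidAlgebra.coeff_mul_single_apply, mul_one, cs.inv_simple] at this
      rw [mul_assoc, cs.simple_mul_simple_self, mul_one, coe_mapDomain] at this
      simpa using this
    subst h2; rfl
  · intro x
    change x ∈ LinearMap.range (twoMap F cs s)
    induction x using MonoidAlgebra.induction_linear with
    | zero => exact zero_mem _
    | add x y hx hy => exact add_mem hx hy
    | single w c =>
      by_cases hw : w ∈ cs.signHom.ker
      · refine ⟨(MonoidAlgebra.single ⟨w, hw⟩ c, 0), ?_⟩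
        simp [twoMap, single_smulX]
      · refine ⟨(0, MonoidAlgebra.single ⟨w * cs.simple s, (mul_simple_ker cs s).mpr hw⟩ c), ?_⟩
        simp [twoMap, single_smulX, MonoidAlgebra.single_mul_single, mul_assoc]

theorem projX (s : B) : Module.Projective (MonoidAlgebra F cs.signHom.ker) (MonoidAlgebra F W) :=
  Module.Projective.of_equiv (LinearEquiv.ofBijective _ (twoMap_bij F cs s))

theorem projV (s : B) (T : Finset B) (hT : Finite (cs.parabolic (T : Set B))) (hc : ((pf cs T).card : F) ≠ 0) :
    Module.Projective (MonoidAlgebra F cs.signHom.ker) (VV F cs T) := by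
  have := projX F cs s
  exact Module.Projective.of_split (VV F cs T).subtype (prj F cs T hT) (LinearMap.ext fun x => prj_coe F cs T hT hc x)

variable {Y : Type} [AddCommGroup Y] [Module (MonoidAlgebra F cs.signHom.ker) Y]
  (e : F ≃+ Y) (he : ∀ (a : cs.signHom.ker) (c f : F), MonoidAlgebra.single a c • e f = e (c * f))
include he

theorem single_smulY (c : F) (a : cs.signHom.ker) (y : Y) : MonoidAlgebra.single a c • y = (MonoidAlgebra.single 1 c : MonoidAlgebra F cs.signHom.ker) • y := by
  obtain ⟨f, rfl⟩ := e.surjective y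
  rw [he, he]

theorem smulY_zero {c : F} (hc : c ≠ 0) {y : Y} (h : (MonoidAlgebra.single 1 c : MonoidAlgebra F cs.signHom.ker) • y = 0) : y = 0 := by
  obtain ⟨f, rfl⟩ := e.surjective y
  rw [he, map_eq_zero_iff _ e.injective] at h
  rw [(mul_eq_zero.mp h).resolve_left hc, map_zero]

theorem homVan {T : Finset B} {j t : B} (ht : t ∈ T) (hT : Finite (cs.parabolic (T : Set B)))
    (hT' : Finite (cs.parabolic ((insert j T : Finset B) : Set B)))
    (hc : ((pf cs T).card : F) ≠ 0) (hc' : ((pf cs (insert j T)).card : F) ≠ 0)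
    (φ : VV F cs T →ₗ[MonoidAlgebra F cs.signHom.ker] Y)
    (hφ : ∀ x : VV F cs T, (x : MonoidAlgebra F W) ∈ VV F cs (insert j T) → φ x = 0) : φ = 0 := by
  let ψ : MonoidAlgebra F W →ₗ[MonoidAlgebra F cs.signHom.ker] Y := φ ∘ₗ prj F cs T hT
  have hψ : ∀ x : VV F cs T, ψ x = φ x := fun x => congrArg φ (prj_coe F cs T hT hc x)
  have h1 : ∀ w : W, ∀ c : F, ψ (MonoidAlgebra.single w c) = (MonoidAlgebra.single 1 (c * sg F cs w) : MonoidAlgebra F cs.signHom.ker) • ψ 1 := by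
    intro w c
    by_cases hw : w ∈ cs.signHom.ker
    · rw [sg_ker F cs hw, mul_one, ← single_smulY F cs e he c ⟨w, hw⟩, ← map_smul, single_smulX, mul_one]
    · rw [sg_not_ker F cs hw]
      have e1 : MonoidAlgebra.single w c = (MonoidAlgebra.single ⟨w * cs.simple t, (mul_simple_ker cs t).mpr hw⟩ c : MonoidAlgebra F cs.signHom.ker) • (MonoidAlgebra.single (cs.simple t) 1 : MonoidAlgebra F W) := by
        rw [single_smulX, MonoidAlgebra.single_mul_single]; simp [mul_assoc]
      have e2 : ψ (MonoidAlgebra.single (cs.simple t) 1) = - ψ 1 := by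
        rw [← map_neg]
        change φ _ = φ _
        congr 1
        apply Subtype.ext
        change MonoidAlgebra.single (cs.simple t) 1 * (((pf cs T).card : F)⁻¹ • hh F cs T) = (-1) * (((pf cs T).card : F)⁻¹ • hh F cs T)
        rw [mul_smul_comm, simple_mul_hh F cs hT ht]; simp
      rw [e1, map_smul, e2, single_smulY F cs e he]
      rw [mul_neg_one, smul_neg, MonoidAlgebra.single_neg, neg_smul]
  have hT'' := hh_mem F cs hT'
  have h2 : ψ (hh F cs (insert j T)) = 0 := by
    have hm : hh F cs (insert j T) ∈ VV F cs T := VV_anti F cs (Finset.subset_insert _ _) hT''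
    exact (hψ ⟨_, hm⟩).trans (hφ ⟨_, hm⟩ hT'')
  have h3 : ψ 1 = 0 := by
    apply smulY_zero F cs e he hc'
    rw [← h2, hh, map_sum, Finset.sum_congr rfl (g := fun _ => (MonoidAlgebra.single 1 (1 : F) : MonoidAlgebra F cs.signHom.ker) • ψ 1)]
    · rw [Finset.sum_const, ← MonoidAlgebra.one_def, one_smul, ← Nat.cast_smul_eq_nsmul (MonoidAlgebra F cs.signHom.ker)]
      congr 1
    · intro v _
      rw [h1, sg_mul_self]
  have h4 : ∀ x, ψ x = 0 := by
    intro x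
    induction x using MonoidAlgebra.induction_linear with
    | zero => exact map_zero _
    | add x y hx hy => rw [map_add, hx, hy, add_zero]
    | single w c => rw [h1, h3, smul_zero]
  ext x
  rw [← hψ, h4]; rfl

omit he in
/-- augmentation -/
noncomputable def aug : MonoidAlgebra F W →ₐ[F] F := MonoidAlgebra.lift F F W 1

omit he in
theorem aug_single (w : W) (c : F) : aug F (MonoidAlgebra.single w c) = c := by
  simp [aug]

omit he in
variable {F cs} in
/-- augmentation to Y -/
noncomputable def eps (he : ∀ (a : cs.signHom.ker) (c f : F), MonoidAlgebra.single a c • e f = e (c * f)) :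
    MonoidAlgebra F W →ₗ[MonoidAlgebra F cs.signHom.ker] Y where
  toFun := fun x => e (aug F x)
  map_add' := by simp
  map_smul' := by
    intro r x
    induction r using MonoidAlgebra.induction_linear with
    | zero => simp
    | add r s hr hs => simp only [add_smul, map_add, RingHom.id_apply] at *; rw [hr, hs]
    | single a c => rw [single_smulX, map_mul, aug_single, RingHom.id_apply, he]

theorem eps_surj : Function.Surjective (eps e he) := by
  intro y
  obtain ⟨f, rfl⟩ := e.surjective y
  exact ⟨MonoidAlgebra.single 1 f, by simp [eps, aug_single]⟩

omit he in
theorem VV_empty : VV F cs ∅ = ⊤ := by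
  rw [eq_top_iff]; intro x _ t ht; simp at ht

theorem eps_ker (h2 : (2 : F) ≠ 0) : LinearMap.ker (eps e he) = ⨆ j ∈ (Finset.univ : Finset B), VV F cs (insert j ∅) := by
  apply le_antisymm
  · have hs : ∀ w : W, (MonoidAlgebra.single w 1 - 1 : MonoidAlgebra F W) ∈ ⨆ j ∈ (Finset.univ : Finset B), VV F cs (insert j ∅) := by
      intro w
      obtain ⟨ω, rfl⟩ := cs.wordProd_surjective w
      induction ω using List.reverseRecOn with
      | nil => simp [← MonoidAlgebra.one_def]
      | append_singleton ω i ih =>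
        have := Submodule.mem_iSup_of_mem (p := fun j => ⨆ (_ : j ∈ (Finset.univ : Finset B)), VV F cs (insert j ∅)) i
          (Submodule.mem_iSup_of_mem (Finset.mem_univ i)
            (show (MonoidAlgebra.single (cs.wordProd ω * cs.simple i) 1 - MonoidAlgebra.single (cs.wordProd ω) 1 : MonoidAlgebra F W) ∈ VV F cs (insert i ∅) from ?_))
        · have h3 := add_mem this ih
          rw [sub_add_sub_cancel] at h3
          rwa [cs.wordProd_append, cs.wordProd_singleton]
        · intro t ht
          have : t = i := by simpa using ht
          subst this
          rw [sub_mul, MonoidAlgebra.single_mul_single, MonoidAlgebra.single_mul_single]; simp [mul_assoc]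
    have hs' : ∀ x : MonoidAlgebra F W, x - MonoidAlgebra.single 1 (aug F x) ∈ ⨆ j ∈ (Finset.univ : Finset B), VV F cs (insert j ∅) := by
      intro x
      induction x using MonoidAlgebra.induction_linear with
      | zero => simp
      | add x y hx hy =>
        rw [map_add, MonoidAlgebra.single_add, add_sub_add_comm]; exact add_mem hx hy
      | single w c =>
        rw [aug_single]
        have := Submodule.smul_mem _ (MonoidAlgebra.single 1 c) (hs w)
        rw [single_smulX, mul_sub, MonoidAlgebra.single_mul_single] at this
        simpa using this
    intro x hx
    have h0 : aug F x = 0 := by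
      have : e (aug F x) = 0 := hx
      simpa using this
    simpa [h0] using hs' x
  · refine iSup₂_le fun j _ x hx => ?_
    have h := congrArg (aug F) (hx j (by simp))
    rw [map_mul, aug_single, mul_one, map_neg] at h
    have h0 : aug F x = 0 := by
      have : (2 : F) * aug F x = 0 := by linear_combination h
      exact (mul_eq_zero.mp this).resolve_left h2
    change e (aug F x) = 0
    rw [h0, map_zero]

end
end AltCox

end

section
namespace AltCox
section
open CategoryTheory CategoryTheory.Abelian
variable {R : Type} [Ring R]

/-- vanishing of Ext -/
def EV (R : Type) [Ring R] (N Y : Type) [AddCommGroup N] [Module R N] [AddCommGroup Y] [Module R Y] (k : ℕ) : Prop :=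
  ∀ x : Ext (ModuleCat.of R N) (ModuleCat.of R Y) k, x = 0

variable {N1 N2 N3 Y : Type} [AddCommGroup N1] [Module R N1] [AddCommGroup N2] [Module R N2]
  [AddCommGroup N3] [Module R N3] [AddCommGroup Y] [Module R Y]

theorem EV_proj [Module.Projective R N1] {k : ℕ} (hk : 1 ≤ k) : EV R N1 Y k := by
  obtain ⟨k, rfl⟩ := Nat.exists_eq_add_of_le' hk
  intro x
  have : Projective (ModuleCat.of R N1) := (IsProjective.iff_projective N1).mp inferInstance
  exact Ext.eq_zero_of_projective x

theorem EV_equiv (e : N1 ≃ₗ[R] N2) {k : ℕ} (h : EV R N1 Y k) : EV R N2 Y k := by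
  intro x
  have e1 : (Ext.mk₀ (e.toModuleIso).inv).comp ((Ext.mk₀ (e.toModuleIso).hom).comp x (zero_add k)) (zero_add k) = x := by
    rw [← Ext.comp_assoc _ _ _ (zero_add 0) _ (by simp), Ext.mk₀_comp_mk₀, Iso.inv_hom_id, Ext.mk₀_id_comp]
  have e2 : (Ext.mk₀ (e.toModuleIso).hom).comp x (zero_add k) = 0 := h _
  rw [← e1, e2, Ext.comp_zero]

theorem mkSE (f : N1 →ₗ[R] N2) (g : N2 →ₗ[R] N3) (hf : Function.Injective f) (hg : Function.Surjective g)
    (hfg : Function.Exact f g) :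
    (ShortComplex.moduleCatMk f g hfg.linearMap_comp_eq_zero).ShortExact where
  exact := by
    rw [ShortComplex.ShortExact.moduleCat_exact_iff_function_exact]; exact hfg
  mono_f := (ModuleCat.mono_iff_injective _).mpr hf
  epi_g := (ModuleCat.epi_iff_surjective _).mpr hg

theorem step_gen {S : ShortComplex (ModuleCat.{0} R)} (hS : S.ShortExact) {Z : ModuleCat.{0} R} {k : ℕ}
    (h1 : ∀ x : Ext S.X₁ Z k, x = 0) (h2 : ∀ x : Ext S.X₂ Z (k + 1), x = 0) (x : Ext S.X₃ Z (k + 1)) : x = 0 := by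
  obtain ⟨x1, rfl⟩ := Ext.contravariant_sequence_exact₃ hS _ x (h2 _) (add_comm 1 k)
  rw [h1 x1, Ext.comp_zero]

theorem step_gen1 {S : ShortComplex (ModuleCat.{0} R)} (hS : S.ShortExact) {Z : ModuleCat.{0} R}
    (h1 : ∀ φ : S.X₁ ⟶ Z, ∃ ψ : S.X₂ ⟶ Z, φ = S.f ≫ ψ) (h2 : ∀ x : Ext S.X₂ Z 1, x = 0) (x : Ext S.X₃ Z 1) : x = 0 := by
  obtain ⟨x1, rfl⟩ := Ext.contravariant_sequence_exact₃ hS _ x (h2 _) (n₀ := 0) rfl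
  obtain ⟨φ, rfl⟩ := Ext.addEquiv₀.symm.surjective x1
  obtain ⟨ψ, rfl⟩ := h1 φ
  rw [Ext.addEquiv₀_symm_apply, ← Ext.mk₀_comp_mk₀, ← Ext.comp_assoc _ _ _ (add_zero 1) _ (by simp),
    ShortComplex.ShortExact.extClass_comp, Ext.zero_comp]

theorem EV_step {f : N1 →ₗ[R] N2} {g : N2 →ₗ[R] N3} (hf : Function.Injective f) (hg : Function.Surjective g)
    (hfg : Function.Exact f g) {k : ℕ} (h1 : EV R N1 Y k) (h2 : EV R N2 Y (k + 1)) : EV R N3 Y (k + 1) :=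
  step_gen (mkSE f g hf hg hfg) h1 h2

theorem EV_step1 {f : N1 →ₗ[R] N2} {g : N2 →ₗ[R] N3} (hf : Function.Injective f) (hg : Function.Surjective g)
    (hfg : Function.Exact f g) (h1 : ∀ φ : N1 →ₗ[R] Y, ∃ ψ : N2 →ₗ[R] Y, φ = ψ ∘ₗ f) (h2 : EV R N2 Y 1) : EV R N3 Y 1 :=
  step_gen1 (mkSE f g hf hg hfg) (fun φ => by
    obtain ⟨ψ, hψ⟩ := h1 φ.hom
    exact ⟨ModuleCat.ofHom ψ, ModuleCat.hom_ext hψ⟩) h2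

variable {B : Type} [Fintype B] [DecidableEq B] {X : Type} [AddCommGroup X] [Module R X]
  (V : Finset B → Submodule R X)

/-- sum of the smaller pieces -/
def UU (T J : Finset B) : Submodule R X := ⨆ j ∈ J, V (insert j T)

/-- quotient -/
abbrev NN (T J : Finset B) : Type := V T ⧸ (UU V T J).submoduleOf (V T)

variable {V} (hV : ∀ T T', T ⊆ T' → V T' ≤ V T)

theorem main_abs (d : ℕ)
    (hV : ∀ T T', T ⊆ T' → V T' ≤ V T)
    (hP : ∀ T, T.card ≤ d → Module.Projective R (V T))
    (hR : ∀ T, T.card ≤ d → ∃ π : X →ₗ[R] V T, ∀ x : V T, π x = x)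
    (hL : ∀ (T J : Finset B) (s : B), V (insert s T) ⊓ ⨆ j ∈ J, V (insert j T) ≤ ⨆ j ∈ J, V (insert j (insert s T)))
    (hH : ∀ (T : Finset B) (j : B), T.Nonempty → (insert j T).card ≤ d → ∀ φ : V T →ₗ[R] Y,
      (∀ x : V T, (x : X) ∈ V (insert j T) → φ x = 0) → φ = 0) (J : Finset B) :
    ∀ T : Finset B, Disjoint T J → ∀ k, 1 ≤ k → T.card + k + 1 ≤ d → EV R (NN V T J) Y k := by
  induction J using Finset.induction_on with
  | empty =>
    intro T _ k hk hd
    have := hP T (by omega)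
    have h0 : (UU V T ∅).submoduleOf (V T) = ⊥ := by
      simp [UU, Submodule.submoduleOf]
    exact EV_equiv (Submodule.quotEquivOfEqBot _ h0).symm (EV_proj hk)
  | insert s J hs ih =>
    intro T hT k hk hd
    rw [Finset.disjoint_insert_right] at hT
    have hT2 : Disjoint (insert s T) J := by
      rw [Finset.disjoint_insert_left]; exact ⟨hs, hT.2⟩
    have hcard : (insert s T).card = T.card + 1 := Finset.card_insert_of_notMem hT.1
    have hsub : V (insert s T) ≤ V T := hV _ _ (Finset.subset_insert _ _)
    have hU : UU V (insert s T) J ≤ UU V T J := 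
      iSup₂_mono fun j _ => hV _ _ (Finset.insert_subset_insert _ (Finset.subset_insert _ _))
    have hUs : UU V T (insert s J) = V (insert s T) ⊔ UU V T J := by
      simp [UU, Finset.mem_insert, iSup_or, iSup_sup_eq]
    let f : NN V (insert s T) J →ₗ[R] NN V T J := Submodule.mapQ _ _ (Submodule.inclusion hsub) (by
      intro x hx; exact hU hx)
    let g : NN V T J →ₗ[R] NN V T (insert s J) := Submodule.mapQ _ _ LinearMap.id (by
      intro x hx
      change (x : X) ∈ UU V T (insert s J)
      rw [hUs]; exact Submodule.mem_sup_right hx)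
    have hf : Function.Injective f := by
      rw [injective_iff_map_eq_zero]
      intro x hx
      obtain ⟨x, rfl⟩ := Submodule.Quotient.mk_surjective _ x
      replace hx := (Submodule.Quotient.mk_eq_zero _).mp hx
      rw [Submodule.Quotient.mk_eq_zero]
      exact hL T J s ⟨x.2, hx⟩
    have hg : Function.Surjective g := by
      intro x
      obtain ⟨x, rfl⟩ := Submodule.Quotient.mk_surjective _ x
      exact ⟨Submodule.Quotient.mk x, rfl⟩
    have hfg : Function.Exact f g := by
      intro x
      obtain ⟨x, rfl⟩ := Submodule.Quotient.mk_surjective _ x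
      refine Iff.trans (Submodule.Quotient.mk_eq_zero _) ?_
      constructor
      · intro hx
        have hx' : (x : X) ∈ UU V T (insert s J) := hx
        rw [hUs] at hx'
        obtain ⟨a, ha, b, hb, e⟩ := Submodule.mem_sup.mp hx'
        refine ⟨Submodule.Quotient.mk ⟨a, ha⟩, ?_⟩
        refine (Submodule.Quotient.eq _).mpr ?_
        change a - (x : X) ∈ UU V T J
        rw [← e]; simpa using hb
      · rintro ⟨y, hy⟩
        obtain ⟨y, rfl⟩ := Submodule.Quotient.mk_surjective _ y
        replace hy := (Submodule.Quotient.eq _).mp hy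
        change (x : X) ∈ UU V T (insert s J)
        rw [hUs]
        have hy' : (y : X) - (x : X) ∈ UU V T J := hy
        have := sub_mem (Submodule.mem_sup_left y.2 : (y : X) ∈ V (insert s T) ⊔ UU V T J) (Submodule.mem_sup_right hy')
        simpa using this
    have h2 := ih T hT.2 k hk hd
    obtain ⟨k, rfl⟩ := Nat.exists_eq_add_of_le' hk
    rcases Nat.eq_zero_or_pos k with rfl | hk'
    · refine EV_step1 hf hg hfg ?_ h2
      intro φ
      rcases J.eq_empty_or_nonempty with rfl | ⟨j, hj⟩
      · obtain ⟨π, hπ⟩ := hR (insert s T) (by omega)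
        have h0 : (UU V T ∅).submoduleOf (V T) = ⊥ := by
          simp [UU, Submodule.submoduleOf]
        refine ⟨φ ∘ₗ (Submodule.mkQ _) ∘ₗ π ∘ₗ (V T).subtype ∘ₗ (Submodule.quotEquivOfEqBot _ h0).toLinearMap, ?_⟩
        refine Submodule.linearMap_qext _ (LinearMap.ext fun x => ?_)
        change φ _ = φ (Submodule.Quotient.mk (π _))
        exact congrArg (fun z => φ (Submodule.Quotient.mk z)) (hπ x).symm
      · have : φ = 0 := by
          refine Submodule.linearMap_qext _ ?_
          rw [LinearMap.zero_comp]
          refine hH (insert s T) j ⟨s, by simp⟩ ?_ _ ?_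
          · have := Finset.card_insert_le j (insert s T); omega
          · intro x hx
            have : Submodule.mkQ ((UU V (insert s T) J).submoduleOf (V (insert s T))) x = 0 := by
              rw [Submodule.mkQ_apply, Submodule.Quotient.mk_eq_zero]
              exact Submodule.mem_iSup_of_mem j (Submodule.mem_iSup_of_mem hj hx)
            rw [LinearMap.comp_apply, this, map_zero]
        exact ⟨0, by rw [this]; rfl⟩
    · exact EV_step hf hg hfg (ih _ hT2 k hk' (by omega)) h2

end
end AltCox

end

section
namespace AltCox
section
open CategoryTheory CategoryTheory.Abelian
variable {k G : Type} [CommRing k] [Group G]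

instance addE : (Rep.toModuleMonoidAlgebra.{0} (k := k) (G := G)).Additive where
  map_add := by
    intros
    rfl

theorem bridge (A : Rep.{0} k G) (n : ℕ)
    (h : EV (MonoidAlgebra k G) (Rep.trivial k G k).ρ.asModule A.ρ.asModule (n + 1)) :
    Subsingleton (groupCohomology A (n + 1)) := by
  let E := Rep.toModuleMonoidAlgebra.{0} (k := k) (G := G)
  have pp : E.PreservesProjectiveObjects := ⟨fun {X} hX =>
    (Rep.equivalenceModuleMonoidAlgebra.{0} (k := k) (G := G)).map_projective_iff X |>.mpr hX⟩
  let P := Rep.barResolution k G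
  let Q := E.mapProjectiveResolution P
  have key : ∀ f : P.complex.X (n + 1) ⟶ A, P.complex.d (n + 2) (n + 1) ≫ f = 0 →
      ∃ g : P.complex.X n ⟶ A, P.complex.d (n + 1) n ≫ g = f := by
    intro f hf
    have hf' : Q.complex.d (n + 2) (n + 1) ≫ E.map f = 0 := by
      change E.map _ ≫ E.map f = 0
      rw [← E.map_comp, hf, E.map_zero]
    obtain ⟨g, hg⟩ := (Q.extMk_eq_zero_iff (E.map f) (n + 2) rfl hf' n rfl).mp (h _)
    obtain ⟨g, rfl⟩ := E.map_surjective g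
    refine ⟨g, E.map_injective ?_⟩
    rw [E.map_comp]; exact hg
  have ex : (P.complex.linearYonedaObj k A).ExactAt (n + 1) := by
    rw [HomologicalComplex.exactAt_iff' _ n (n + 1) (n + 2) (by simp) (by simp), ShortComplex.moduleCat_exact_iff]
    exact key
  have hz := (ex.isZero_homology).of_iso (groupCohomologyIso A (n + 1) P)
  exact ModuleCat.subsingleton_of_isZero hz

end
end AltCox

end

section
namespace AltCox
section
variable {B W : Type} [Fintype B] [DecidableEq B] [Group W] {M : CoxeterMatrix B}

theorem final [Infinite W] (cs : CoxeterSystem M W)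
    (p : ℕ) (hp : p.Prime) (hodd : Odd p) (hfree : M.IsPFree p)
    (hpar : ∀ T : Set B, T ≠ Set.univ → Finite (cs.parabolic T)) :
    ∀ k : ℕ, 0 < k → k < min (p - 2) (Fintype.card B - 1) →
      Subsingleton (groupCohomology
        (Rep.trivial (ZMod p) ↥cs.signHom.ker (ZMod p)) k) := by
  intro k hk hkd
  have : Fact p.Prime := ⟨hp⟩
  obtain ⟨k, rfl⟩ := Nat.exists_eq_add_of_le' hk
  apply bridge
  let F := ZMod p
  let Y := (Rep.trivial (ZMod p) ↥cs.signHom.ker (ZMod p)).ρ.asModule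
  let e : F ≃+ Y := (Representation.asModuleEquiv _).symm.toAddEquiv
  have he : ∀ (a : cs.signHom.ker) (c f : F), MonoidAlgebra.single a c • e f = e (c * f) := by
    intro a c f
    apply (Representation.asModuleEquiv _).injective
    change (Representation.asModuleEquiv _) (MonoidAlgebra.single a c • (Representation.asModuleEquiv _).symm f) = (c * f : F)
    rw [Representation.asModuleEquiv_map_smul]
    simp [Representation.asAlgebraHom_single]
  obtain ⟨s⟩ : Nonempty B := Fintype.card_pos_iff.mp (by omega)
  have h2 : (2 : F) ≠ 0 := by
    intro h
    have : ((2 : ℕ) : ZMod p) = 0 := by exact_mod_cast h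
    rw [ZMod.natCast_eq_zero_iff] at this
    have := Nat.le_of_dvd (by norm_num) this
    have := hp.two_le
    have : p = 2 := by omega
    subst this; exact absurd hodd (by decide)
  have hfinT : ∀ T : Finset B, T ≠ Finset.univ → Finite (cs.parabolic (T : Set B)) := by
    intro T hT
    exact hpar _ (by simpa using hT)
  have hfin : ∀ w : W, Finite (cs.parabolic (ds cs w : Set B)) := by
    intro w
    apply hfinT
    intro h
    obtain ⟨i, hi⟩ := exists_asc cs w
    exact hi (mem_ds.mp (h ▸ Finset.mem_univ i))
  set d := min (p - 2) (Fintype.card B - 1) with hd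
  have hfinC : ∀ T : Finset B, T.card ≤ d → Finite (cs.parabolic (T : Set B)) := by
    intro T hT
    apply hfinT
    rintro rfl
    rw [Finset.card_univ] at hT
    omega
  have hcC : ∀ T : Finset B, T.card ≤ d → ((pf cs T).card : F) ≠ 0 := by
    intro T hT h
    have := hfinC T hT
    have h3 := not_dvd_card cs p hp hodd hfree (T : Set B) (by rw [Set.ncard_coe_finset]; omega)
    rw [← card_pf this] at h3
    exact h3 ((ZMod.natCast_eq_zero_iff _ _).mp h)
  have main := main_abs (R := MonoidAlgebra F cs.signHom.ker) (V := VV F cs) (Y := Y) d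
    (fun T T' h => VV_anti F cs h)
    (fun T hT => projV F cs s T (hfinC T hT) (hcC T hT))
    (fun T hT => ⟨prj F cs T (hfinC T hT), prj_coe F cs T (hfinC T hT) (hcC T hT)⟩)
    (fun T J s => lattice F cs hfin T J s)
    (fun T j ⟨t, ht⟩ hc φ hφ => by
      have hc' : T.card ≤ d := (Finset.card_le_card (Finset.subset_insert j T)).trans hc
      exact homVan F cs e he ht (hfinC _ hc') (hfinC _ hc) (hcC _ hc') (hcC _ hc) φ hφ)
    Finset.univ ∅ (Finset.disjoint_empty_left _) (k + 1) hk (by simp; omega)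
  refine EV_equiv ?_ main
  let g : VV F cs ∅ →ₗ[MonoidAlgebra F cs.signHom.ker] Y := eps e he ∘ₗ (VV F cs ∅).subtype
  have hg : Function.Surjective g := by
    intro y
    obtain ⟨x, rfl⟩ := eps_surj F cs e he y
    exact ⟨⟨x, by rw [VV_empty]; trivial⟩, rfl⟩
  have hk : (UU (VV F cs) ∅ Finset.univ).submoduleOf (VV F cs ∅) = LinearMap.ker g := by
    rw [LinearMap.ker_comp, eps_ker F cs e he h2]; rfl
  exact (Submodule.quotEquivOfEq _ _ hk).trans (g.quotKerEquivOfSurjective hg)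

end
end AltCox

end

/-- Let `p` be an odd prime and `W` an infinite `p`-free Coxeter group of
rank `n = |S|` all of whose proper standard parabolic subgroups are finite.  Then
`H^k(A_W, 𝔽_p) = 0` for `0 < k < min (p-2) (n-1)`. -/
theorem alternating_subgroup_cohomology_vanishes_infinite {B W : Type} [Fintype B]
    [Group W] [Infinite W] {M : CoxeterMatrix B} (cs : CoxeterSystem M W)
    (p : ℕ) (hp : p.Prime) (hodd : Odd p) (hfree : M.IsPFree p)
    (hpar : ∀ T : Set B, T ≠ Set.univ → Finite (cs.parabolic T)) :
    ∀ k : ℕ, 0 < k → k < min (p - 2) (Fintype.card B - 1) →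
      Subsingleton (groupCohomology
        (Rep.trivial (ZMod p) ↥cs.signHom.ker (ZMod p)) k) := by
  classical
  exact AltCox.final cs p hp hodd hfree hpar
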